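/- arXiv:2009.01580 — 2 statements merged into one kernel-verified Lean document; each statement's English description precedes it below -/
import Mathlib

section
/- Let n ≥ 4 and let 𝒮 be a nonempty finite family of pairwise disjoint subsets of {1,…,n}, each of cardinality between 2 and n−2. Then the polytope Δ_{n,2} ∩ ⋂_{S∈𝒮} {x ∈ ℝ^n : ∑_{i∈S} x_i ≤ 1} is an admissible polytope for G_{n,2}, i.e., it equals P_σ for some admissible set σ; moreover, if 𝒮 does not consist of exactly two sets whose union is all of {1,…,n}, this admissible polytope has affine dimension n−1. -/
/-- The hypersimplex `Δ_{n,k} ⊂ ℝ^n`. -/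
def hypersimplex (n k : ℕ) : Set (Fin n → ℝ) :=
  {x | (∀ i, 0 ≤ x i ∧ x i ≤ 1) ∧ ∑ i, x i = (k : ℝ)}

/-- The Plücker coordinate `P^{ij}(A) = A_{i1}A_{j2} − A_{j1}A_{i2}` of an
n×2 complex matrix. -/
def plucker {n : ℕ} (A : Matrix (Fin n) (Fin 2) ℂ) (i j : Fin n) : ℂ :=
  A i 0 * A j 1 - A j 0 * A i 1

/-- The Plücker support `σ(A) = {{i,j} : P^{ij}(A) ≠ 0}` of an n×2 matrix. -/
def pluckerSupport {n : ℕ} (A : Matrix (Fin n) (Fin 2) ℂ) : Set (Finset (Fin n)) :=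
  {p | ∃ i j : Fin n, i ≠ j ∧ p = {i, j} ∧ plucker A i j ≠ 0}

/-- A set `σ` of 2-element subsets of `{1,…,n}` is admissible for `G_{n,2}`
if it is the Plücker support of some rank-2 complex n×2 matrix. -/
def IsAdmissible {n : ℕ} (σ : Set (Finset (Fin n))) : Prop :=
  ∃ A : Matrix (Fin n) (Fin 2) ℂ, A.rank = 2 ∧ pluckerSupport A = σ

/-- The 0/1 vertex `Λ_p = ∑_{i∈p} e_i` of the hypersimplex associated with a
subset `p` of indices. -/
def vertexOf {n : ℕ} (p : Finset (Fin n)) : Fin n → ℝ :=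
  fun i => if i ∈ p then 1 else 0

/-- The admissible polytope `P_σ = conv{e_i + e_j : {i,j} ∈ σ}`. -/
def admPolytope {n : ℕ} (σ : Set (Finset (Fin n))) : Set (Fin n → ℝ) :=
  convexHull ℝ (vertexOf '' σ)

/-!
Adding singletons to `𝒮` gives a partition of all indices, and since `x i ≤ 1` holds on the
hypersimplex anyway, the polytope does not change. Giving distinct complex labels `c` to the parts,
the matrix with rows `(1, c i)` has Plücker coordinates `c j - c i`, so its support consists of the
pairs that cross the partition. The polytope is the convex hull of the corresponding vertices
because every linear functional on it is maximized greedily: take the heaviest index, then the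
heaviest index outside its part. If there are at least three parts, any two indices `i`, `j` have a
common crossing partner `k`, and `(e_i + e_k) - (e_j + e_k) = e_i - e_j`; these differences span the
hyperplane of vectors with coordinate sum zero. If there are only two parts, the cardinality bound
forces both to lie in `𝒮`.
-/

open Finset

section Partition

variable {α : Type*} [DecidableEq α] {s : Finset α} {P : Finpartition s} {𝒮 : Finset (Finset α)}

lemma exists_finpartition_superset_card_eq_one (hdisj : (𝒮 : Set (Finset α)).PairwiseDisjoint id)
    (hempty : ∅ ∉ 𝒮) (hsub : ∀ S ∈ 𝒮, S ⊆ s) :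
    ∃ P : Finpartition s, 𝒮 ⊆ P.parts ∧ ∀ T ∈ P.parts, T ∉ 𝒮 → #T = 1 := by
  let R : Finpartition s :=
    (Finpartition.ofPairwiseDisjoint 𝒮 hdisj).extendOfLE (Finset.sup_le hsub)
  have hR : 𝒮 ⊆ R.parts := fun S hS =>
    Finpartition.parts_subset_extendOfLE _ _
      (mem_erase.mpr ⟨ne_of_mem_of_not_mem hS hempty, hS⟩)
  let refinement (T : Finset α) (hT : T ∈ R.parts) : Finpartition T :=
    if T ∈ 𝒮 then Finpartition.indiscrete (R.ne_bot hT) else ⊥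
  refine ⟨R.bind refinement, fun S hS => ?_, fun T hT hT𝒮 => ?_⟩
  · exact Finpartition.mem_bind.mpr ⟨S, hR hS, by simp [refinement, hS]⟩
  · obtain ⟨U, hU, hTU⟩ := Finpartition.mem_bind.mp hT
    by_cases hU𝒮 : U ∈ 𝒮
    · simp only [refinement, if_pos hU𝒮, Finpartition.indiscrete_parts, mem_singleton] at hTU
      exact absurd (hTU ▸ hU𝒮) hT𝒮
    · simp only [refinement, if_neg hU𝒮, Finpartition.mem_bot_iff] at hTU
      obtain ⟨a, -, rfl⟩ := hTU
      exact card_singleton a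

lemma exists_part_notMem_of_card_lt {𝒯 : Finset (Finset α)} (h : #𝒯 < #P.parts) :
    ∃ a ∈ s, P.part a ∉ 𝒯 := by
  obtain ⟨T, hT, hT𝒯⟩ := exists_mem_notMem_of_card_lt_card h
  obtain ⟨a, ha⟩ := P.nonempty_of_mem_parts hT
  exact ⟨a, P.subset hT ha, by rwa [P.part_eq_of_mem hT ha]⟩

lemma one_lt_card_parts (hs : s.Nonempty) (hlt : ∀ T ∈ P.parts, #T < #s) : 1 < #P.parts := by
  by_contra! hle
  have hne : P.parts.Nonempty := P.parts_nonempty hs.ne_empty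
  obtain ⟨T, hT⟩ := card_eq_one.mp (le_antisymm hle hne.card_pos)
  have hsum := P.sum_card_parts
  rw [hT, sum_singleton] at hsum
  exact (hlt T (by simp [hT])).ne hsum

lemma parts_eq_of_card_parts_eq_two (hsub : 𝒮 ⊆ P.parts)
    (hsingle : ∀ T ∈ P.parts, T ∉ 𝒮 → #T = 1) (hcard : ∀ T ∈ P.parts, #T + 2 ≤ #s)
    (htwo : #P.parts = 2) : P.parts = 𝒮 := by
  refine Subset.antisymm (fun T hT => ?_) hsub
  by_contra hT𝒮
  have hrest : #(P.parts.erase T) = 1 := by rw [card_erase_of_mem hT, htwo]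
  obtain ⟨U, hU⟩ := card_eq_one.mp hrest
  have hsum : #T + #U = #s := by
    rw [← P.sum_card_parts, ← add_sum_erase _ _ hT, hU, sum_singleton]
  have hUP : U ∈ P.parts := mem_of_mem_erase (by simp [hU] : U ∈ P.parts.erase T)
  have := hcard U hUP
  have := hsingle T hT hT𝒮
  omega

end Partition

section SumZero

variable {ι K : Type*} [Fintype ι]

lemma ker_sum_proj_le_of_single_sub_single_mem [DecidableEq ι] [Ring K] [Nonempty ι]
    {U : Submodule K (ι → K)}
    (hU : ∀ i j, (Pi.single i 1 - Pi.single j 1 : ι → K) ∈ U) :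
    LinearMap.ker (∑ i, LinearMap.proj i : (ι → K) →ₗ[K] K) ≤ U := by
  intro v hv
  have hsum : ∑ i, v i = 0 := by simpa using hv
  obtain ⟨j⟩ := ‹Nonempty ι›
  have hv' : v = ∑ i, v i • (Pi.single i 1 - Pi.single j 1 : ι → K) := by
    simp only [smul_sub, sum_sub_distrib, ← sum_smul, hsum, zero_smul, sub_zero]
    exact pi_eq_sum_univ' v
  rw [hv']
  exact U.sum_mem fun i _ => U.smul_mem _ (hU i j)

lemma finrank_ker_sum_proj_add_one [Field K] [Nonempty ι] :
    Module.finrank K (LinearMap.ker (∑ i, LinearMap.proj i : (ι → K) →ₗ[K] K)) + 1 =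
      Fintype.card ι := by
  classical
  have hne : (∑ i, LinearMap.proj i : (ι → K) →ₗ[K] K) ≠ 0 := by
    obtain ⟨j⟩ := ‹Nonempty ι›
    intro h
    simpa using LinearMap.congr_fun h (Pi.single j 1)
  rw [Module.Dual.finrank_ker_add_one_of_ne_zero hne, Module.finrank_fintype_fun_eq_card]

end SumZero

section Hypersimplex

variable {n k : ℕ}

/-- The hypersimplex `Δ_{n,k}` cut by the half-spaces `∑ i ∈ S, x i ≤ 1`, one for each `S ∈ 𝒮`. -/
def cappedHypersimplex (n k : ℕ) (𝒮 : Finset (Finset (Fin n))) : Set (Fin n → ℝ) :=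
  hypersimplex n k ∩ {x | ∀ S ∈ 𝒮, ∑ i ∈ S, x i ≤ 1}

lemma convex_hypersimplex : Convex ℝ (hypersimplex n k) := by
  have hcube : Convex ℝ {x : Fin n → ℝ | ∀ i, 0 ≤ x i ∧ x i ≤ 1} := by
    simpa [Set.Icc, Pi.le_def, forall_and] using convex_Icc (0 : Fin n → ℝ) 1
  have hsum : IsLinearMap ℝ fun x : Fin n → ℝ => ∑ i, x i :=
    ⟨fun x y => sum_add_distrib, fun a x => (mul_sum ..).symm⟩
  exact hcube.inter (convex_hyperplane hsum k)

lemma convex_cappedHypersimplex {𝒮 : Finset (Finset (Fin n))} :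
    Convex ℝ (cappedHypersimplex n k 𝒮) := by
  refine convex_hypersimplex.inter ?_
  simp only [Set.ofPred_forall]
  refine convex_iInter₂ fun S _ => convex_halfSpace_le ?_ 1
  exact ⟨fun x y => sum_add_distrib, fun a x => (mul_sum ..).symm⟩

lemma cappedHypersimplex_eq_of_subset {𝒮 𝒯 : Finset (Finset (Fin n))} (hsub : 𝒮 ⊆ 𝒯)
    (hsingle : ∀ T ∈ 𝒯, T ∉ 𝒮 → #T = 1) :
    cappedHypersimplex n k 𝒮 = cappedHypersimplex n k 𝒯 := by
  refine Set.Subset.antisymm (fun x hx => ⟨hx.1, fun T hT => ?_⟩)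
    fun x hx => ⟨hx.1, fun S hS => hx.2 S (hsub hS)⟩
  by_cases hT𝒮 : T ∈ 𝒮
  · exact hx.2 T hT𝒮
  · obtain ⟨i, rfl⟩ := card_eq_one.mp (hsingle T hT hT𝒮)
    simpa using (hx.1.1 i).2

lemma sum_vertexOf (S p : Finset (Fin n)) : ∑ i ∈ S, vertexOf p i = #(S ∩ p) := by
  simp [vertexOf]

lemma vertexOf_eq_sum_single (p : Finset (Fin n)) :
    vertexOf p = ∑ i ∈ p, (Pi.single i 1 : Fin n → ℝ) := by
  ext j
  simp [vertexOf, Finset.sum_apply, Pi.single_apply]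

lemma vertexOf_mem_hypersimplex (p : Finset (Fin n)) : vertexOf p ∈ hypersimplex n #p := by
  refine ⟨fun i => ?_, by rw [sum_vertexOf, univ_inter]⟩
  unfold vertexOf
  split_ifs <;> norm_num

lemma finrank_direction_affineSpan_eq [Nonempty (Fin n)] {Q : Set (Fin n → ℝ)}
    (hQ : Q ⊆ hypersimplex n k)
    (hdiff : ∀ i j, (Pi.single i 1 - Pi.single j 1 : Fin n → ℝ) ∈ (affineSpan ℝ Q).direction) :
    Module.finrank ℝ (affineSpan ℝ Q).direction = n - 1 := by
  have hle : (affineSpan ℝ Q).direction ≤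
      LinearMap.ker (∑ i, LinearMap.proj i : (Fin n → ℝ) →ₗ[ℝ] ℝ) := by
    rw [direction_affineSpan, vectorSpan_def, Submodule.span_le]
    rintro _ ⟨x, hx, y, hy, rfl⟩
    simp [(hQ hx).2, (hQ hy).2]
  rw [le_antisymm hle (ker_sum_proj_le_of_single_sub_single_mem hdiff)]
  exact Nat.eq_sub_of_add_eq (finrank_ker_sum_proj_add_one.trans (Fintype.card_fin n))

end Hypersimplex

lemma rank_eq_two_of_plucker_ne_zero {n : ℕ} {A : Matrix (Fin n) (Fin 2) ℂ} {i j : Fin n}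
    (h : plucker A i j ≠ 0) : A.rank = 2 := by
  have hdet : (A.submatrix ![i, j] id).det = plucker A i j := by
    rw [Matrix.det_fin_two, plucker, mul_comm (A j 0)]
    rfl
  have hunit : IsUnit (A.submatrix ![i, j] id) :=
    (Matrix.isUnit_iff_isUnit_det _).mpr (hdet ▸ h.isUnit)
  refine le_antisymm A.rank_le_width ?_
  calc 2 = (A.submatrix ![i, j] id).rank := by rw [Matrix.rank_of_isUnit _ hunit, Fintype.card_fin]
    _ ≤ A.rank := A.rank_submatrix_le _ _

section CrossingPairs

variable {n : ℕ} {P : Finpartition (univ : Finset (Fin n))}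

/-- The pairs of indices that lie in different parts of `P`: if `P` has at least two parts,
the bases of the loopless rank-two matroid whose parallel classes are the parts of `P`. -/
def crossingPairs (P : Finpartition (univ : Finset (Fin n))) : Set (Finset (Fin n)) :=
  {p | ∃ i j, p = {i, j} ∧ P.part i ≠ P.part j}

lemma isAdmissible_crossingPairs (hP : 1 < #P.parts) : IsAdmissible (crossingPairs P) := by
  obtain ⟨label, hlabel⟩ := exists_injective_nat (Finset (Fin n))
  let A : Matrix (Fin n) (Fin 2) ℂ := Matrix.of fun i => ![1, label (P.part i)]
  have hA (i j : Fin n) : plucker A i j ≠ 0 ↔ P.part i ≠ P.part j := by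
    simp [A, plucker, sub_eq_zero, hlabel.eq_iff, eq_comm]
  refine ⟨A, ?_, ?_⟩
  · obtain ⟨i, -, -⟩ := exists_part_notMem_of_card_lt (𝒯 := ∅) (Nat.zero_lt_of_lt hP)
    obtain ⟨j, -, hj⟩ := exists_part_notMem_of_card_lt (𝒯 := {P.part i}) hP
    exact rank_eq_two_of_plucker_ne_zero ((hA j i).mpr (notMem_singleton.mp hj))
  · ext p
    simp only [pluckerSupport, crossingPairs, Set.mem_ofPred_eq, hA]
    exact exists₂_congr fun i j => ⟨fun h => h.2, fun h => ⟨ne_of_apply_ne _ h.2, h⟩⟩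

lemma vertexOf_pair_mem_cappedHypersimplex {i j : Fin n} (hij : P.part i ≠ P.part j) :
    vertexOf {i, j} ∈ cappedHypersimplex n 2 P.parts := by
  refine ⟨?_, fun T hT => ?_⟩
  · simpa [card_pair (ne_of_apply_ne _ hij)] using vertexOf_mem_hypersimplex {i, j}
  · rw [sum_vertexOf, Nat.cast_le_one, card_le_one]
    intro a ha b hb
    rw [mem_inter, mem_insert, mem_singleton] at ha hb
    have hab : P.part a = P.part b := by
      rw [P.part_eq_of_mem hT ha.1, P.part_eq_of_mem hT hb.1]
    grind

lemma exists_mem_crossingPairs_sum_mul_le (hP : 1 < #P.parts) {x : Fin n → ℝ}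
    (hx : x ∈ cappedHypersimplex n 2 P.parts) (w : Fin n → ℝ) :
    ∃ p ∈ crossingPairs P, ∑ k, x k * w k ≤ ∑ k ∈ p, w k := by
  obtain ⟨i₀, -, -⟩ := exists_part_notMem_of_card_lt (𝒯 := ∅) (Nat.zero_lt_of_lt hP)
  obtain ⟨i, -, hi⟩ := exists_max_image univ w ⟨i₀, mem_univ i₀⟩
  obtain ⟨j₀, -, hj₀⟩ := exists_part_notMem_of_card_lt (𝒯 := {P.part i}) hP
  obtain ⟨j, hj, hjmax⟩ := exists_max_image {j | P.part j ≠ P.part i} w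
    ⟨j₀, by simpa using hj₀⟩
  have hji : P.part j ≠ P.part i := (mem_filter.mp hj).2
  have hij : i ≠ j := (ne_of_apply_ne _ hji).symm
  refine ⟨{i, j}, ⟨i, j, rfl, hji.symm⟩, ?_⟩
  set T := P.part i
  have hT : ∑ k ∈ T, x k ≤ 1 := hx.2 T (P.part_mem.mpr (mem_univ i))
  have htotal : ∑ k ∈ T, x k + ∑ k ∈ Tᶜ, x k = 2 := by
    rw [sum_add_sum_compl]; exact_mod_cast hx.1.2
  have hinside : ∑ k ∈ T, x k * w k ≤ (∑ k ∈ T, x k) * w i := by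
    rw [sum_mul]
    gcongr with k
    · exact (hx.1.1 k).1
    · exact hi k (mem_univ k)
  have houtside : ∑ k ∈ Tᶜ, x k * w k ≤ (∑ k ∈ Tᶜ, x k) * w j := by
    rw [sum_mul]
    gcongr with k hk
    · exact (hx.1.1 k).1
    · refine hjmax k (mem_filter.mpr ⟨mem_univ k, fun h => mem_compl.mp hk ?_⟩)
      exact h ▸ P.mem_part_self.mpr (mem_univ k)
  have hwji : 0 ≤ w i - w j := sub_nonneg.mpr (hi j (mem_univ j))
  calc ∑ k, x k * w k = ∑ k ∈ T, x k * w k + ∑ k ∈ Tᶜ, x k * w k := (sum_add_sum_compl ..).symm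
    _ ≤ (∑ k ∈ T, x k) * w i + (∑ k ∈ Tᶜ, x k) * w j := add_le_add hinside houtside
    _ = (∑ k ∈ T, x k) * (w i - w j) + 2 * w j := by rw [← htotal]; ring
    _ ≤ 1 * (w i - w j) + 2 * w j := by gcongr
    _ = w i + w j := by ring
    _ = ∑ k ∈ {i, j}, w k := (sum_pair hij).symm

lemma cappedHypersimplex_eq_admPolytope (hP : 1 < #P.parts) :
    cappedHypersimplex n 2 P.parts = admPolytope (crossingPairs P) := by
  have hclosed : IsClosed (admPolytope (crossingPairs P)) :=
    ((Set.toFinite _).image _).isClosed_convexHull ℝ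
  refine Set.Subset.antisymm (fun x hx => ?_) (convexHull_min ?_ convex_cappedHypersimplex)
  · rw [admPolytope, ← iInter_halfSpaces_eq (convex_convexHull ℝ _) hclosed, Set.mem_iInter]
    intro f
    obtain ⟨p, hp, hle⟩ := exists_mem_crossingPairs_sum_mul_le hP hx fun k => f (Pi.single k 1)
    refine ⟨vertexOf p, subset_convexHull ℝ _ ⟨p, hp, rfl⟩, ?_⟩
    calc f x = ∑ k, x k * f (Pi.single k 1) := by
          conv_lhs => rw [pi_eq_sum_univ' x]
          simp only [map_sum, map_smul, smul_eq_mul]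
      _ ≤ ∑ k ∈ p, f (Pi.single k 1) := hle
      _ = f (vertexOf p) := by rw [vertexOf_eq_sum_single, map_sum]
  · rintro _ ⟨_, ⟨i, j, rfl, hij⟩, rfl⟩
    exact vertexOf_pair_mem_cappedHypersimplex hij

lemma finrank_direction_affineSpan_cappedHypersimplex (hP : 2 < #P.parts) :
    Module.finrank ℝ (affineSpan ℝ (cappedHypersimplex n 2 P.parts)).direction = n - 1 := by
  obtain ⟨i₀, -, -⟩ := exists_part_notMem_of_card_lt (𝒯 := ∅) (Nat.zero_lt_of_lt hP)
  have : Nonempty (Fin n) := ⟨i₀⟩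
  refine finrank_direction_affineSpan_eq Set.inter_subset_left fun i j => ?_
  obtain ⟨k, -, hk⟩ := exists_part_notMem_of_card_lt (card_le_two.trans_lt hP)
    (𝒯 := {P.part i, P.part j})
  obtain ⟨hki, hkj⟩ : P.part k ≠ P.part i ∧ P.part k ≠ P.part j := by simpa using hk
  have hsub : vertexOf {k, i} - vertexOf {k, j} = (Pi.single i 1 - Pi.single j 1 : Fin n → ℝ) := by
    simp only [vertexOf_eq_sum_single, sum_pair (ne_of_apply_ne _ hki),
      sum_pair (ne_of_apply_ne _ hkj), add_sub_add_left_eq_sub]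
  rw [← hsub]
  exact AffineSubspace.vsub_mem_direction
    (subset_affineSpan ℝ _ (vertexOf_pair_mem_cappedHypersimplex hki))
    (subset_affineSpan ℝ _ (vertexOf_pair_mem_cappedHypersimplex hkj))

end CrossingPairs

/-- for a nonempty family 𝒮 of pairwise disjoint subsets of
{1,…,n} of cardinalities between 2 and n−2, the polytope
Δ_{n,2} ∩ ⋂_{S∈𝒮} {∑_{i∈S} x_i ≤ 1} is an admissible polytope for G_{n,2};
and unless 𝒮 consists of exactly two sets covering {1,…,n}, it has affine
dimension n−1. -/
theorem stmt11 (n : ℕ) (hn : 4 ≤ n) (𝒮 : Finset (Finset (Fin n))) (hne : 𝒮.Nonempty)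
    (hdisj : ∀ S ∈ 𝒮, ∀ S' ∈ 𝒮, S ≠ S' → Disjoint S S')
    (hcard : ∀ S ∈ 𝒮, 2 ≤ S.card ∧ S.card ≤ n - 2)
    (Q : Set (Fin n → ℝ))
    (hQ : Q = hypersimplex n 2 ∩ {x | ∀ S ∈ 𝒮, ∑ i ∈ S, x i ≤ 1}) :
    (∃ σ : Set (Finset (Fin n)), IsAdmissible σ ∧ Q = admPolytope σ) ∧
    ((¬ ∃ S₁ S₂ : Finset (Fin n), S₁ ≠ S₂ ∧ 𝒮 = {S₁, S₂} ∧ S₁ ∪ S₂ = Finset.univ) →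
      Module.finrank ℝ (affineSpan ℝ Q).direction = n - 1) := by
  have hempty : ∅ ∉ 𝒮 := fun h => by simpa using (hcard ∅ h).1
  obtain ⟨P, hsub, hsingle⟩ := exists_finpartition_superset_card_eq_one
    (fun S hS S' hS' => hdisj S hS S' hS') hempty fun S _ => S.subset_univ
  have hcardP : ∀ T ∈ P.parts, #T + 2 ≤ #(univ : Finset (Fin n)) := fun T hT => by
    rw [card_fin]
    by_cases hT𝒮 : T ∈ 𝒮
    · have := hcard T hT𝒮
      omega
    · have := hsingle T hT hT𝒮
      omega
  have hparts : 1 < #P.parts :=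
    one_lt_card_parts ⟨⟨0, by omega⟩, mem_univ _⟩ fun T hT => by have := hcardP T hT; omega
  have hQP : Q = cappedHypersimplex n 2 P.parts :=
    hQ.trans (cappedHypersimplex_eq_of_subset hsub hsingle)
  refine ⟨⟨crossingPairs P, isAdmissible_crossingPairs hparts,
    hQP.trans (cappedHypersimplex_eq_admPolytope hparts)⟩, fun hcover => ?_⟩
  rw [hQP]
  refine finrank_direction_affineSpan_cappedHypersimplex
    (lt_of_le_of_ne hparts fun htwo => hcover ?_)
  obtain ⟨S₁, S₂, hne₁₂, hP⟩ := card_eq_two.mp htwo.symm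
  have h𝒮 : P.parts = 𝒮 := parts_eq_of_card_parts_eq_two hsub hsingle hcardP htwo.symm
  exact ⟨S₁, S₂, hne₁₂, h𝒮.symm.trans hP, by simpa [hP] using P.sup_parts⟩
end

section
/- Let n ≥ 4 and let σ be an admissible set for G_{n,2} whose admissible polytope P_σ has affine dimension n−1 and P_σ ≠ Δ_{n,2}. Then there exists a nonempty finite family 𝒮 of pairwise disjoint subsets of {1,…,n}, each of cardinality between 2 and n−2, such that P_σ = Δ_{n,2} ∩ ⋂_{S∈𝒮} {x ∈ ℝ^n : ∑_{i∈S} x_i ≤ 1}. -/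
/-!
If no row of `A` vanishes, proportionality of rows is an equivalence relation, and `P_σ` is the
convex hull of the `e_i + e_j` with `i`, `j` in different classes. Such a hull is cut out of
`{x ≥ 0, ∑ x = 2}` by the inequalities `∑_{i ∈ S} x_i ≤ 1` over the classes `S`. By Hahn-Banach it
suffices to bound a linear functional `c` at a point `x` satisfying these inequalities by its value
at a vertex, and the greedy vertex works: let `i` maximize `c`, let `j` maximize `c` outside the
class `S` of `i`, and put `t = ∑_{l ∈ S} x_l ≤ 1`; then
`c · x ≤ t c_i + (2 - t) c_j ≤ c_i + c_j`.

A zero row, or a class missing exactly one index, makes a coordinate sum over a proper nonempty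
set of indices constant on the vertices, and this drops the dimension below `n - 1`; a class of all
indices leaves no vertices. Singleton classes only give the hypersimplex inequalities `x_i ≤ 1`.
-/

open Finset

section CoordSum

variable {ι K : Type*}

/-- The linear functional `x ↦ ∑ i ∈ S, x i`, giving the equations and inequalities that
describe the polytopes. -/
def coordSum (K : Type*) [CommSemiring K] (S : Finset ι) : (ι → K) →ₗ[K] K :=
  ∑ i ∈ S, LinearMap.proj i

@[simp]
lemma coordSum_apply [CommSemiring K] (S : Finset ι) (x : ι → K) :
    coordSum K S x = ∑ i ∈ S, x i := by
  simp [coordSum]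

lemma sum_single_add_single [DecidableEq ι] [AddCommMonoid K] (S : Finset ι) (i j : ι) (a b : K) :
    ∑ l ∈ S, (Pi.single i a + Pi.single j b : ι → K) l =
      (if i ∈ S then a else 0) + if j ∈ S then b else 0 := by
  simp only [Pi.add_apply, sum_add_distrib, sum_pi_single']

lemma surjective_coordSum_prod_coordSum_univ [Fintype ι] [CommRing K] {S : Finset ι}
    (hS : S.Nonempty) (hS' : S ≠ univ) :
    Function.Surjective ((coordSum K S).prod (coordSum K univ)) := by
  classical
  obtain ⟨a, ha⟩ := hS
  obtain ⟨b, hb⟩ : ∃ b, b ∉ S := by simpa [eq_univ_iff_forall] using hS'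
  rintro ⟨u, v⟩
  refine ⟨Pi.single a u + Pi.single b (v - u), ?_⟩
  simp [-Pi.add_apply, sum_single_add_single, ha, hb]

lemma finrank_vectorSpan_add_finrank_le_of_surjective {V W : Type*} [Field K]
    [AddCommGroup V] [Module K V] [FiniteDimensional K V] [AddCommGroup W] [Module K W]
    {f : V →ₗ[K] W} (hf : Function.Surjective f) {s : Set V}
    (hs : ∀ x ∈ s, ∀ y ∈ s, f x = f y) :
    Module.finrank K (vectorSpan K s) + Module.finrank K W ≤ Module.finrank K V := by
  have hker : vectorSpan K s ≤ LinearMap.ker f := by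
    rw [vectorSpan_def, Submodule.span_le]
    rintro _ ⟨x, hx, y, hy, rfl⟩
    simp [hs x hx y hy]
  rw [← f.finrank_range_add_finrank_ker, LinearMap.range_eq_top.2 hf, finrank_top, add_comm]
  gcongr
  exact Submodule.finrank_mono hker

lemma finrank_vectorSpan_add_two_le [Fintype ι] [Field K] {s : Set (ι → K)} {S : Finset ι}
    (hS : S.Nonempty) (hS' : S ≠ univ) {c d : K} (hc : ∀ x ∈ s, ∑ i ∈ S, x i = c)
    (hd : ∀ x ∈ s, ∑ i, x i = d) :
    Module.finrank K (vectorSpan K s) + 2 ≤ Fintype.card ι := by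
  have h := finrank_vectorSpan_add_finrank_le_of_surjective (s := s)
    (surjective_coordSum_prod_coordSum_univ (K := K) hS hS')
    (fun x hx y hy => by simp [hc x hx, hc y hy, hd x hx, hd y hy])
  simpa using h

end CoordSum

section CrossVectors

variable {ι : Type*} [Fintype ι]

lemma exists_notMem_sum_mul_le_add {R : Type*} [CommRing R] [LinearOrder R]
    [IsStrictOrderedRing R] {C : ι → Finset ι} {x : ι → R} (hx : 0 ≤ x) (hsum : ∑ i, x i = 2)
    (hC : ∀ i, ∑ l ∈ C i, x l ≤ 1) (c : ι → R) :
    ∃ i, ∃ j ∉ C i, ∑ l, c l * x l ≤ c i + c j := by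
  classical
  have hι : (univ : Finset ι).Nonempty := by
    rw [nonempty_iff_ne_empty]
    intro h
    simp [h] at hsum
  obtain ⟨i, -, hi⟩ := exists_max_image univ c hι
  have hcompl : (C i)ᶜ.Nonempty := by
    rw [nonempty_iff_ne_empty, Ne, compl_eq_empty_iff]
    intro h
    have := hC i
    rw [h, hsum] at this
    exact one_lt_two.not_ge this
  obtain ⟨j, hj, hjmax⟩ := exists_max_image (C i)ᶜ c hcompl
  refine ⟨i, j, mem_compl.1 hj, ?_⟩
  have hsplit : ∑ l ∈ (C i)ᶜ, x l = 2 - ∑ l ∈ C i, x l := by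
    rw [← hsum, ← sum_add_sum_compl (C i) x, add_sub_cancel_left]
  calc ∑ l, c l * x l = ∑ l ∈ C i, c l * x l + ∑ l ∈ (C i)ᶜ, c l * x l :=
        (sum_add_sum_compl _ _).symm
    _ ≤ ∑ l ∈ C i, c i * x l + ∑ l ∈ (C i)ᶜ, c j * x l := by
        gcongr with l _ l hl
        · exact hx l
        · exact hi l (mem_univ l)
        · exact hx l
        · exact hjmax l hl
    _ = c i * ∑ l ∈ C i, x l + c j * (2 - ∑ l ∈ C i, x l) := by
        rw [← mul_sum, ← mul_sum, hsplit]
    _ ≤ c i + c j := by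
        linarith [mul_nonneg (sub_nonneg.2 (hi j (mem_univ j))) (sub_nonneg.2 (hC i))]

variable [DecidableEq ι] (P : Finpartition (univ : Finset ι))

/-- The vectors `e_i + e_j` with `i` and `j` in different parts of `P`, i.e. the edge vectors of
the complete multipartite graph with parts `P`; the vertices of `P_σ` for loopless `σ`. -/
def crossVectors : Set (ι → ℝ) :=
  {v | ∃ i j, j ∉ P.part i ∧ v = Pi.single i 1 + Pi.single j 1}

/-- The polytope cut out of `{x ≥ 0, ∑ x = 2}` by `∑ i ∈ S, x i ≤ 1` for the parts `S` of `P`: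
the base polytope of the rank 2 truncation of the partition matroid of `P`. -/
def partitionPolytope : Set (ι → ℝ) :=
  {x | 0 ≤ x ∧ ∑ i, x i = 2 ∧ ∀ S ∈ P.parts, ∑ i ∈ S, x i ≤ 1}

variable {P}

lemma sum_eq_two_of_mem_crossVectors {v : ι → ℝ} (hv : v ∈ crossVectors P) : ∑ i, v i = 2 := by
  obtain ⟨i, j, -, rfl⟩ := hv
  rw [sum_single_add_single]
  norm_num

lemma notMem_of_notMem_part {S : Finset ι} (hS : S ∈ P.parts) {i j : ι} (hij : j ∉ P.part i)
    (hi : i ∈ S) : j ∉ S := by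
  rwa [P.part_eq_of_mem hS hi] at hij

variable (P)

lemma finite_crossVectors : (crossVectors P).Finite := by
  refine (Set.finite_range fun p : ι × ι => (Pi.single p.1 1 + Pi.single p.2 1 : ι → ℝ)).subset ?_
  rintro _ ⟨i, j, -, rfl⟩
  exact ⟨(i, j), rfl⟩

lemma crossVectors_subset_partitionPolytope : crossVectors P ⊆ partitionPolytope P := by
  intro v hv
  refine ⟨?_, sum_eq_two_of_mem_crossVectors hv, fun S hS => ?_⟩ <;>
    obtain ⟨i, j, hij, rfl⟩ := hv
  · exact add_nonneg (Pi.single_nonneg.2 zero_le_one) (Pi.single_nonneg.2 zero_le_one)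
  · rw [sum_single_add_single]
    by_cases hi : i ∈ S
    · simp [hi, notMem_of_notMem_part hS hij hi]
    · rw [if_neg hi, zero_add]
      split_ifs <;> norm_num

lemma convex_partitionPolytope : Convex ℝ (partitionPolytope P) := by
  have h : partitionPolytope P = Set.Ici 0 ∩ ({x | coordSum ℝ univ x = 2} ∩
      ⋂ S ∈ P.parts, {x | coordSum ℝ S x ≤ 1}) := by
    ext x
    simp [partitionPolytope]
  rw [h]
  exact (convex_Ici 0).inter <| (convex_hyperplane (coordSum ℝ univ).isLinear 2).inter <|
    convex_iInter₂ fun S _ => convex_halfSpace_le (coordSum ℝ S).isLinear 1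

theorem convexHull_crossVectors : convexHull ℝ (crossVectors P) = partitionPolytope P := by
  refine (convexHull_min (crossVectors_subset_partitionPolytope P)
    (convex_partitionPolytope P)).antisymm ?_
  rintro x ⟨hx, hsum, hP⟩
  rw [← iInter_halfSpaces_eq (convex_convexHull ℝ _)
    ((finite_crossVectors P).isClosed_convexHull ℝ)]
  refine Set.mem_iInter.2 fun f => ?_
  obtain ⟨i, j, hij, hle⟩ := exists_notMem_sum_mul_le_add hx hsum
    (fun i => hP _ (P.part_mem.2 (mem_univ i))) (fun i => f (Pi.single i 1))
  refine ⟨_, subset_convexHull ℝ _ ⟨i, j, hij, rfl⟩, ?_⟩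
  have hfx : f x = ∑ l, f (Pi.single l 1) * x l := by
    calc f x = f (∑ l, x l • Pi.single l 1) := by simp [← Pi.single_smul, univ_sum_single]
      _ = ∑ l, f (Pi.single l 1) * x l := by simp [mul_comm]
  rwa [hfx, map_add]

variable {P}

lemma card_add_two_le_of_mem_parts [Nontrivial ι]
    (hfull : Fintype.card ι ≤ Module.finrank ℝ (vectorSpan ℝ (crossVectors P)) + 1)
    {S : Finset ι} (hS : S ∈ P.parts) : S.card + 2 ≤ Fintype.card ι := by
  by_contra! hcard
  have hcompl : ∀ i ∉ S, ∀ j ∉ S, i = j := by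
    have hle : Sᶜ.card ≤ 1 := by
      rw [card_compl]
      omega
    simpa using card_le_one.1 hle
  have hone : ∀ v ∈ crossVectors P, ∑ i ∈ S, v i = 1 := by
    rintro _ ⟨i, j, hij, rfl⟩
    rw [sum_single_add_single]
    by_cases hi : i ∈ S
    · simp [hi, notMem_of_notMem_part hS hij hi]
    · have hj : j ∈ S := by
        by_contra hj
        exact hij (hcompl i hi j hj ▸ P.mem_part (mem_univ i))
      simp [hi, hj]
  have hne : S ≠ univ := by
    rintro rfl
    have hempty : crossVectors P = ∅ := Set.eq_empty_of_forall_notMem fun v hv => by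
      linarith [hone v hv, sum_eq_two_of_mem_crossVectors hv]
    rw [hempty, vectorSpan_empty, finrank_bot] at hfull
    linarith [Fintype.one_lt_card (α := ι)]
  have := finrank_vectorSpan_add_two_le (P.nonempty_of_mem_parts hS) hne hone
    fun v hv => sum_eq_two_of_mem_crossVectors hv
  omega

end CrossVectors

section Hypersimplex

variable {n : ℕ}

lemma partitionPolytope_eq_hypersimplex_inter (P : Finpartition (univ : Finset (Fin n))) :
    partitionPolytope P = hypersimplex n 2 ∩
      {x | ∀ S ∈ P.parts.filter (2 ≤ ·.card), ∑ i ∈ S, x i ≤ 1} := by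
  ext x
  constructor
  · rintro ⟨hx, hsum, hP⟩
    refine ⟨⟨fun i => ⟨hx i, ?_⟩, by exact_mod_cast hsum⟩,
      fun S hS => hP S (mem_filter.1 hS).1⟩
    exact (single_le_sum (fun l _ => hx l) (P.mem_part (mem_univ i))).trans
      (hP _ (P.part_mem.2 (mem_univ i)))
  · rintro ⟨⟨hx, hsum⟩, hP⟩
    refine ⟨fun i => (hx i).1, by exact_mod_cast hsum, fun S hS => ?_⟩
    by_cases hcard : 2 ≤ S.card
    · exact hP S (mem_filter.2 ⟨hS, hcard⟩)
    · have hone : S.card = 1 := by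
        have := (P.nonempty_of_mem_parts hS).card_pos
        omega
      obtain ⟨i, rfl⟩ := card_eq_one.1 hone
      simpa using (hx i).2

lemma vertexOf_pair {i j : Fin n} (hij : i ≠ j) :
    vertexOf {i, j} = Pi.single i 1 + Pi.single j 1 := by
  ext l
  by_cases hi : l = i
  · simp [vertexOf, hi, hij]
  · simp [vertexOf, hi, Pi.single_apply]

end Hypersimplex

section Plucker

variable {n : ℕ} {A : Matrix (Fin n) (Fin 2) ℂ}

lemma plucker_self (i : Fin n) : plucker A i i = 0 :=
  sub_self _

lemma plucker_swap (i j : Fin n) : plucker A j i = -plucker A i j :=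
  (neg_sub _ _).symm

lemma plucker_eq_zero_trans {i j k : Fin n} (hj : A j ≠ 0) (hij : plucker A i j = 0)
    (hjk : plucker A j k = 0) : plucker A i k = 0 := by
  unfold plucker at *
  rcases Fin.exists_fin_two.1 (Function.ne_iff.1 hj) with h | h <;> apply mul_left_cancel₀ h
  · linear_combination A k 0 * hij + A i 0 * hjk
  · linear_combination A k 1 * hij + A i 1 * hjk

open Classical in
/-- The partition of the row indices into classes of proportional rows, i.e. the parallel classes
of the loopless rank 2 matroid of `A`. -/
noncomputable def parallelClasses (A : Matrix (Fin n) (Fin 2) ℂ) (hA : ∀ i, A i ≠ 0) :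
    Finpartition (univ : Finset (Fin n)) :=
  Finpartition.ofSetoid
    { r := fun i j => plucker A i j = 0
      iseqv :=
        { refl := plucker_self
          symm := fun {i j} h => by rw [plucker_swap, h, neg_zero]
          trans := fun {_ j _} => plucker_eq_zero_trans (hA j) } }

lemma mem_part_parallelClasses (hA : ∀ i, A i ≠ 0) {i j : Fin n} :
    j ∈ (parallelClasses A hA).part i ↔ plucker A i j = 0 := by
  classical
  exact Finpartition.mem_part_ofSetoid_iff_rel

lemma vertexOf_image_pluckerSupport (hA : ∀ i, A i ≠ 0) :
    vertexOf '' pluckerSupport A = crossVectors (parallelClasses A hA) := by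
  ext v
  simp only [crossVectors, mem_part_parallelClasses]
  constructor
  · rintro ⟨_, ⟨i, j, hij, rfl, hp⟩, rfl⟩
    exact ⟨i, j, hp, vertexOf_pair hij⟩
  · rintro ⟨i, j, hp, rfl⟩
    have hij : i ≠ j := by
      rintro rfl
      exact hp (plucker_self i)
    exact ⟨{i, j}, ⟨i, j, hij, rfl, hp⟩, vertexOf_pair hij⟩

lemma admPolytope_pluckerSupport (hA : ∀ i, A i ≠ 0) :
    admPolytope (pluckerSupport A) = hypersimplex n 2 ∩
      {x | ∀ S ∈ (parallelClasses A hA).parts.filter (2 ≤ ·.card), ∑ i ∈ S, x i ≤ 1} := by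
  rw [admPolytope, vertexOf_image_pluckerSupport hA, convexHull_crossVectors,
    partitionPolytope_eq_hypersimplex_inter]

lemma finrank_vectorSpan_add_two_le_of_row_eq_zero [Nontrivial (Fin n)] {i : Fin n}
    (hi : A i = 0) :
    Module.finrank ℝ (vectorSpan ℝ (vertexOf '' pluckerSupport A)) + 2 ≤ n := by
  have hzero : ∀ v ∈ vertexOf '' pluckerSupport A, ∑ l ∈ {i}, v l = 0 := by
    rintro _ ⟨_, ⟨j, k, -, rfl, hp⟩, rfl⟩
    have hj : i ≠ j := by
      rintro rfl
      exact hp (by simp [plucker, hi])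
    have hk : i ≠ k := by
      rintro rfl
      exact hp (by simp [plucker, hi])
    simp [vertexOf, hj, hk]
  have htwo : ∀ v ∈ vertexOf '' pluckerSupport A, ∑ l, v l = 2 := by
    rintro _ ⟨_, ⟨j, k, hjk, rfl, -⟩, rfl⟩
    rw [vertexOf_pair hjk, sum_single_add_single]
    norm_num
  simpa using finrank_vectorSpan_add_two_le (singleton_nonempty i) (singleton_ne_univ i) hzero htwo

end Plucker

/-- every admissible polytope for G_{n,2} of affine dimension
n−1 other than Δ_{n,2} itself is cut out of Δ_{n,2} by a nonempty family of
inequalities ∑_{i∈S} x_i ≤ 1 over pairwise disjoint sets S of cardinality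
between 2 and n−2. -/
theorem stmt12 (n : ℕ) (hn : 4 ≤ n) (σ : Set (Finset (Fin n))) (hσ : IsAdmissible σ)
    (hdim : Module.finrank ℝ (affineSpan ℝ (admPolytope σ)).direction = n - 1)
    (hne : admPolytope σ ≠ hypersimplex n 2) :
    ∃ 𝒮 : Finset (Finset (Fin n)), 𝒮.Nonempty ∧
      (∀ S ∈ 𝒮, ∀ S' ∈ 𝒮, S ≠ S' → Disjoint S S') ∧
      (∀ S ∈ 𝒮, 2 ≤ S.card ∧ S.card ≤ n - 2) ∧
      admPolytope σ = hypersimplex n 2 ∩ {x | ∀ S ∈ 𝒮, ∑ i ∈ S, x i ≤ 1} := by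
  obtain ⟨A, -, rfl⟩ := hσ
  have : Nontrivial (Fin n) := Fin.nontrivial_iff_two_le.2 (by omega)
  have hfull : n ≤ Module.finrank ℝ (vectorSpan ℝ (vertexOf '' pluckerSupport A)) + 1 := by
    rw [admPolytope, affineSpan_convexHull, direction_affineSpan] at hdim
    omega
  have hA : ∀ i, A i ≠ 0 := fun i hi => by
    have := finrank_vectorSpan_add_two_le_of_row_eq_zero hi
    omega
  have hpoly := admPolytope_pluckerSupport hA
  rw [vertexOf_image_pluckerSupport hA] at hfull
  refine ⟨_, ?_, fun S hS S' hS' => ?_, fun S hS => ?_, hpoly⟩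
  · rw [nonempty_iff_ne_empty]
    intro hempty
    exact hne (by simpa [hempty] using hpoly)
  · exact (parallelClasses A hA).disjoint (mem_filter.1 hS).1 (mem_filter.1 hS').1
  · obtain ⟨hS, hcard⟩ := mem_filter.1 hS
    have := card_add_two_le_of_mem_parts (by simpa using hfull) hS
    rw [Fintype.card_fin] at this
    exact ⟨hcard, by omega⟩
end
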